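/- Let K ≥ 5 and let x^{(0)} := (1, 1/8, 3/4, 1, 1, …, 1) ∈ ℝ^K. Let x^{(1)} be the point obtained from x^{(0)} by one full cycle of exact cyclic coordinate minimization of g (coordinates updated in the order 1, 2, …, K, each coordinate set to the unique minimizer of g with all other coordinates fixed at their most recent values). Then x_k^{(1)} = −1/2 for k = 1, …, K−2, x_{K−1}^{(1)} = −1/6, and x_K^{(1)} = 5/12. -/

import Mathlib

open Finset

/-- Squared Euclidean norm of a vector in `ℝ^n`. -/
noncomputable def sqnorm {n : ℕ} (v : Fin n → ℝ) : ℝ := ∑ i, v i ^ 2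

/-- The `K × K` tridiagonal Toeplitz matrix with `A_{ij} = 1` iff `|i − j| ≤ 1`. -/
def triA (K : ℕ) : Matrix (Fin K) (Fin K) ℝ :=
  Matrix.of fun i j => if (i : ℕ) ≤ (j : ℕ) + 1 ∧ (j : ℕ) ≤ (i : ℕ) + 1 then 1 else 0

/-- The objective `g(x) = ‖Ax‖²` for the tridiagonal example. -/
noncomputable def gT {K : ℕ} (x : Fin K → ℝ) : ℝ := sqnorm ((triA K).mulVec x)

/-- The initial point `x^{(0)} = (1, 1/8, 3/4, 1, 1, …, 1)`. -/
noncomputable def xinit (K : ℕ) : Fin K → ℝ := fun k =>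
  if (k : ℕ) = 1 then 1 / 8 else if (k : ℕ) = 2 then 3 / 4 else 1

/-- Intermediate point during the cycle updating coordinate `k`: coordinates
`j < k` take their new values from `x1`, coordinate `k` is the free variable `t`,
and coordinates `j > k` keep their old values from `x0`. -/
def midpt {K : ℕ} (x0 x1 : Fin K → ℝ) (k : Fin K) (t : ℝ) : Fin K → ℝ :=
  fun j => if j < k then x1 j else if j = k then t else x0 j

/-- `x1` is obtained from `x0` by one full cycle of exact cyclic coordinate
minimization of `g` (coordinates in the order `1, 2, …, K`, each coordinate set
to the minimizer of `g` with all other coordinates fixed at their most recent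
values). -/
def ExactCoordCycle {K : ℕ} (x0 x1 : Fin K → ℝ) : Prop :=
  ∀ (k : Fin K) (t : ℝ), gT (midpt x0 x1 k (x1 k)) ≤ gT (midpt x0 x1 k t)

/-!
Along one coordinate the objective `‖Mx‖²` is a quadratic polynomial with leading coefficient the
squared norm of a column of `M`, so a cycle of exact coordinate minimization is a Gauss–Seidel sweep
for the normal equations `MᵀMx = 0`: a triangular system with nonzero diagonal, whose solution is
unique. It remains to check that the claimed vector solves it. For the tridiagonal matrix the normal
equations have the stencil `1, 2, 3, 2, 1`, truncated at both ends, and against the constant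
initial values `1` the stationary value is `-1/2`, since `-(1 + 2)/2 - 3/2 + (2 + 1) = 0`; the
values `1/8` and `3/4` compensate the truncation at the left end, while that at the right end
produces `-1/6` and `5/12`.
-/

open Matrix

section LeastSquares

variable {m n : ℕ} (M : Matrix (Fin m) (Fin n) ℝ) (x : Fin n → ℝ) (k : Fin n)

lemma sqnorm_eq_dotProduct (v : Fin n → ℝ) : sqnorm v = v ⬝ᵥ v := by
  simp only [sqnorm, dotProduct, sq]

lemma sqnorm_nonneg (v : Fin n → ℝ) : 0 ≤ sqnorm v :=
  sum_nonneg fun i _ ↦ sq_nonneg (v i)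

lemma sqnorm_pos_of_apply_ne_zero {v : Fin n → ℝ} {i : Fin n} (hi : v i ≠ 0) : 0 < sqnorm v :=
  sum_pos' (fun j _ ↦ sq_nonneg (v j)) ⟨i, mem_univ i, by positivity⟩

lemma sqnorm_mulVec_add_single (s : ℝ) :
    sqnorm (M *ᵥ (x + Pi.single k s)) =
      sqnorm (M *ᵥ x) + 2 * s * (Mᵀ *ᵥ (M *ᵥ x)) k + s ^ 2 * sqnorm (M.col k) := by
  have gradient_eq : (Mᵀ *ᵥ (M *ᵥ x)) k = M.col k ⬝ᵥ (M *ᵥ x) := rfl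
  simp only [mulVec_add, mulVec_single, op_smul_eq_smul, sqnorm_eq_dotProduct, add_dotProduct,
    dotProduct_add, smul_dotProduct, dotProduct_smul, smul_eq_mul, gradient_eq,
    dotProduct_comm (M *ᵥ x) (M.col k)]
  ring

lemma eq_zero_of_forall_quadratic_nonneg {a b : ℝ} (h : ∀ s : ℝ, 0 ≤ a * (s * s) + b * s) :
    b = 0 := by
  have hdiscrim : discrim a b 0 ≤ 0 := discrim_le_zero fun s ↦ by simpa using h s
  simpa [discrim, sq_nonpos_iff] using hdiscrim

lemma forall_sqnorm_mulVec_le_add_single_iff :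
    (∀ s, sqnorm (M *ᵥ x) ≤ sqnorm (M *ᵥ (x + Pi.single k s))) ↔
      (Mᵀ *ᵥ (M *ᵥ x)) k = 0 := by
  simp only [sqnorm_mulVec_add_single]
  constructor
  · intro h
    have : 2 * (Mᵀ *ᵥ (M *ᵥ x)) k = 0 :=
      eq_zero_of_forall_quadratic_nonneg (a := sqnorm (M.col k)) fun s ↦ by linarith [h s]
    linarith
  · intro h s
    rw [h]
    linarith [mul_nonneg (sq_nonneg s) (sqnorm_nonneg (M.col k))]

end LeastSquares

section CoordinateCycle

variable {K : ℕ} (x0 x1 : Fin K → ℝ) (k : Fin K)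

lemma midpt_add (t s : ℝ) : midpt x0 x1 k (t + s) = midpt x0 x1 k t + Pi.single k s := by
  ext j
  rcases eq_or_ne j k with rfl | hj
  · simp [midpt]
  · simp [midpt, hj]

lemma triA_transpose : (triA K)ᵀ = triA K := by
  ext i j
  simp only [triA, transpose_apply, of_apply, and_comm]

theorem exactCoordCycle_iff :
    ExactCoordCycle x0 x1 ↔
      ∀ k, (triA K *ᵥ (triA K *ᵥ midpt x0 x1 k (x1 k))) k = 0 := by
  refine forall_congr' fun k ↦ ?_
  rw [← (Equiv.addLeft (x1 k)).forall_congr_right]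
  simpa only [gT, Equiv.coe_addLeft, midpt_add, triA_transpose] using
    forall_sqnorm_mulVec_le_add_single_iff (triA K) (midpt x0 x1 k (x1 k)) k

lemma sqnorm_col_triA_pos : 0 < sqnorm ((triA K).col k) :=
  sqnorm_pos_of_apply_ne_zero (i := k) (by simp [triA])

variable {x0 x1} in
theorem ExactCoordCycle.unique {y1 : Fin K → ℝ} (hx : ExactCoordCycle x0 x1)
    (hy : ExactCoordCycle x0 y1) : x1 = y1 := by
  funext k
  induction k using WellFoundedLT.induction with
  | ind k ih =>
  have hmidpt : midpt x0 y1 k = midpt x0 x1 k := by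
    funext t j
    by_cases hj : j < k
    · simp [midpt, hj, ih j hj]
    · simp [midpt, hj]
  have hle := hy k (x1 k)
  have hgrad := (exactCoordCycle_iff x0 x1).mp hx k
  rw [hmidpt, ← add_sub_cancel (x1 k) (y1 k), midpt_add, gT, gT, sqnorm_mulVec_add_single,
    triA_transpose, hgrad] at hle
  have hsq : (y1 k - x1 k) ^ 2 ≤ 0 :=
    nonpos_of_mul_nonpos_left (by linarith) (sqnorm_col_triA_pos k)
  linarith [sq_nonpos_iff _ |>.mp hsq]

end CoordinateCycle

section ZeroExtension

/-- Extension by zero of a finite sequence to the integers, so that the stencil of a banded matrix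
can be written without boundary cases. -/
def zeroExtend {α : Type*} [Zero α] {n : ℕ} (v : Fin n → α) (i : ℤ) : α :=
  if h : 0 ≤ i ∧ i < n then v ⟨i.toNat, by omega⟩ else 0

lemma zeroExtend_of_neg {α : Type*} [Zero α] {n : ℕ} (v : Fin n → α) {i : ℤ} (hi : i < 0) :
    zeroExtend v i = 0 :=
  dif_neg (by omega)

lemma zeroExtend_of_le {α : Type*} [Zero α] {n : ℕ} (v : Fin n → α) {i : ℤ} (hi : n ≤ i) :
    zeroExtend v i = 0 :=
  dif_neg (by omega)

lemma zeroExtend_val {α : Type*} [Zero α] {n : ℕ} (v : Fin n → α) (k : Fin n) :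
    zeroExtend v k = v k := by
  simp [zeroExtend]

lemma zeroExtend_eq_sum {α : Type*} [AddCommMonoid α] {n : ℕ} (v : Fin n → α) (i : ℤ) :
    zeroExtend v i = ∑ j : Fin n, if (j : ℤ) = i then v j else 0 := by
  by_cases h : 0 ≤ i ∧ i < n
  · have hj (j : Fin n) : (j : ℤ) = i ↔ j = ⟨i.toNat, by omega⟩ := by
      rw [Fin.ext_iff]; dsimp only; omega
    simp [zeroExtend, h, hj]
  · have hj (j : Fin n) : (j : ℤ) ≠ i := by omega
    simp [zeroExtend, h, hj]

variable {K : ℕ} (x0 x1 y : Fin K → ℝ) (k : Fin K)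

lemma triA_mulVec_apply :
    (triA K *ᵥ y) k = zeroExtend y (k - 1) + zeroExtend y k + zeroExtend y (k + 1) := by
  simp only [zeroExtend_eq_sum, ← sum_add_distrib, mulVec, dotProduct, triA, of_apply]
  refine sum_congr rfl fun j _ ↦ ?_
  split_ifs <;> first | omega | simp

lemma zeroExtend_triA_mulVec {i : ℤ} (hi : -1 ≤ i) (hiK : i ≤ K) :
    zeroExtend (triA K *ᵥ y) i =
      zeroExtend y (i - 1) + zeroExtend y i + zeroExtend y (i + 1)
        - (if i = -1 then zeroExtend y (i + 1) else 0)
        - (if i = K then zeroExtend y (i - 1) else 0) := by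
  obtain rfl | rfl | ⟨hi0, hiK'⟩ : i = -1 ∨ i = K ∨ 0 ≤ i ∧ i < K := by omega
  · rw [if_pos rfl, if_neg (by omega)]
    simp [zeroExtend_of_neg]
  · rw [if_neg (by omega), if_pos rfl]
    simp [zeroExtend_of_le]
  · lift i to ℕ using hi0
    rw [if_neg (by omega), if_neg (by omega), sub_zero, sub_zero]
    let row : Fin K := ⟨i, by omega⟩
    exact (zeroExtend_val _ row).trans (triA_mulVec_apply y row)

theorem triA_mulVec_triA_mulVec_apply :
    (triA K *ᵥ (triA K *ᵥ y)) k =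
      (zeroExtend y (k - 2) + 2 * zeroExtend y (k - 1))
        + (3 - (if (k : ℕ) = 0 then 1 else 0) - (if (k : ℕ) + 1 = K then 1 else 0)) * y k
        + (2 * zeroExtend y (k + 1) + zeroExtend y (k + 2)) := by
  have hpred : (k : ℤ) - 1 = -1 ↔ (k : ℕ) = 0 := by omega
  have hsucc : (k : ℤ) + 1 = K ↔ (k : ℕ) + 1 = K := by omega
  rw [triA_mulVec_apply, zeroExtend_triA_mulVec y (by omega) (by omega),
    zeroExtend_val, triA_mulVec_apply, zeroExtend_triA_mulVec y (by omega) (by omega),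
    if_neg (show (k : ℤ) - 1 ≠ K by omega), if_neg (show (k : ℤ) + 1 ≠ -1 by omega)]
  simp only [hpred, hsucc, sub_add_cancel, add_sub_cancel_right, sub_sub, add_assoc,
    Int.reduceAdd, zeroExtend_val]
  split_ifs <;> ring

lemma zeroExtend_midpt_of_lt (t : ℝ) {i : ℤ} (hi : i < k) :
    zeroExtend (midpt x0 x1 k t) i = zeroExtend x1 i := by
  unfold zeroExtend
  split_ifs with h
  · have : (⟨i.toNat, by omega⟩ : Fin K) < k := by rw [Fin.lt_def]; dsimp only; omega
    simp [midpt, this]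
  · rfl

lemma zeroExtend_midpt_of_gt (t : ℝ) {i : ℤ} (hi : k < i) :
    zeroExtend (midpt x0 x1 k t) i = zeroExtend x0 i := by
  unfold zeroExtend
  split_ifs with h
  · have : k < (⟨i.toNat, by omega⟩ : Fin K) := by rw [Fin.lt_def]; dsimp only; omega
    simp [midpt, this.not_gt, this.ne']
  · rfl

end ZeroExtension

section ExplicitCycle

variable {K : ℕ}

/-- The vector `(-1/2, …, -1/2, -1/6, 5/12)` reached from `xinit K` after one cycle. -/
noncomputable def cycledPoint (K : ℕ) : Fin K → ℝ := fun k ↦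
  if (k : ℕ) + 2 < K then -(1 / 2) else if (k : ℕ) + 2 = K then -(1 / 6) else 5 / 12

lemma eq_cycledPoint_iff {x : Fin K → ℝ} (hK : 2 ≤ K) :
    x = cycledPoint K ↔
      (∀ k : Fin K, (k : ℕ) < K - 2 → x k = -(1 / 2)) ∧
      (∀ k : Fin K, (k : ℕ) = K - 2 → x k = -(1 / 6)) ∧
      (∀ k : Fin K, (k : ℕ) = K - 1 → x k = 5 / 12) := by
  constructor
  · rintro rfl
    refine ⟨fun k hk ↦ ?_, fun k hk ↦ ?_, fun k hk ↦ ?_⟩ <;> unfold cycledPoint <;>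
      split_ifs <;> first | rfl | omega
  · rintro ⟨hlow, hpenult, hlast⟩
    funext k
    unfold cycledPoint
    split_ifs
    · exact hlow k (by omega)
    · exact hpenult k (by omega)
    · exact hlast k (by omega)

lemma zeroExtend_xinit_right_stencil (hK : 3 ≤ K) (k : Fin K) :
    2 * zeroExtend (xinit K) (k + 1) + zeroExtend (xinit K) (k + 2) =
      if (k : ℕ) = 0 then 1 else if (k : ℕ) + 1 = K then 0 else
        (if (k : ℕ) + 2 = K then 2 else 3) - if (k : ℕ) = 1 then 1 / 2 else 0 := by
  simp only [zeroExtend, xinit]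
  split_ifs <;> first | omega | norm_num

lemma zeroExtend_cycledPoint_left_stencil (hK : 3 ≤ K) (k : Fin K) :
    zeroExtend (cycledPoint K) (k - 2) + 2 * zeroExtend (cycledPoint K) (k - 1) =
      if (k : ℕ) = 0 then 0 else if (k : ℕ) + 1 = K then -(5 / 6) else
        -(3 / 2) + if (k : ℕ) = 1 then 1 / 2 else 0 := by
  simp only [zeroExtend, cycledPoint]
  split_ifs <;> first | omega | norm_num

theorem exactCoordCycle_xinit_cycledPoint (hK : 3 ≤ K) :
    ExactCoordCycle (xinit K) (cycledPoint K) := by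
  rw [exactCoordCycle_iff]
  intro k
  rw [triA_mulVec_triA_mulVec_apply,
    zeroExtend_midpt_of_lt _ _ _ _ (by omega), zeroExtend_midpt_of_lt _ _ _ _ (by omega),
    zeroExtend_midpt_of_gt _ _ _ _ (by omega), zeroExtend_midpt_of_gt _ _ _ _ (by omega),
    zeroExtend_cycledPoint_left_stencil hK, zeroExtend_xinit_right_stencil hK]
  have hself : midpt (xinit K) (cycledPoint K) k (cycledPoint K k) k = cycledPoint K k := by
    simp [midpt]
  rw [hself, cycledPoint]
  split_ifs <;> first | omega | norm_num

theorem bcd_one_cycle_explicit_general (hK : 3 ≤ K) (x1 : Fin K → ℝ) :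
    ExactCoordCycle (xinit K) x1 ↔
      (∀ k : Fin K, (k : ℕ) < K - 2 → x1 k = -(1 / 2)) ∧
      (∀ k : Fin K, (k : ℕ) = K - 2 → x1 k = -(1 / 6)) ∧
      (∀ k : Fin K, (k : ℕ) = K - 1 → x1 k = 5 / 12) := by
  have hcycle := exactCoordCycle_xinit_cycledPoint hK
  rw [← eq_cycledPoint_iff (by omega)]
  exact ⟨fun h ↦ h.unique hcycle, fun h ↦ h ▸ hcycle⟩

end ExplicitCycle

/-- explicit computation of one cycle of exact cyclic
coordinate minimization on `g(x) = ‖Ax‖²` from `x^{(0)} = (1,1/8,3/4,1,…,1)`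
for `K ≥ 5`: the result is `x^{(1)} = (−1/2, …, −1/2, −1/6, 5/12)`. -/
theorem bcd_one_cycle_explicit {K : ℕ} (hK : 5 ≤ K)
    (x1 : Fin K → ℝ) (hcycle : ExactCoordCycle (xinit K) x1) :
    (∀ k : Fin K, (k : ℕ) < K - 2 → x1 k = -(1 / 2)) ∧
    (∀ k : Fin K, (k : ℕ) = K - 2 → x1 k = -(1 / 6)) ∧
    (∀ k : Fin K, (k : ℕ) = K - 1 → x1 k = 5 / 12) :=
  (bcd_one_cycle_explicit_general (by omega) x1).mp hcycle
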